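/- Let M₀ and M₁ be positive semidefinite 2×2 complex matrices with M₀ + M₁ = I. Then the average success probability of guessing a uniformly random bit r encoded in a uniformly random BB84 basis s, namely (1/4)·( ⟨0|₀ M₀ |0⟩₀ + ⟨1|₀ M₁ |1⟩₀ + ⟨0|₁ M₀ |0⟩₁ + ⟨1|₁ M₁ |1⟩₁ ) = (1/4)·( e₀*M₀e₀ + e₁*M₁e₁ + f₀*M₀f₀ + f₁*M₁f₁ ), is a real number and is at most (2 + √2)/4. (This shows the probability p of correctly reading a bit encoded in an unknown conjugate basis is bounded away from 1.) -/

import Mathlib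

open Matrix
open scoped ComplexOrder

/-- `|0⟩₀ = (1,0)` (the component at index `false` is the first coordinate). -/
noncomputable def e0 : Bool → ℂ := fun t => if t then 0 else 1

/-- `|1⟩₀ = (0,1)`. -/
noncomputable def e1 : Bool → ℂ := fun t => if t then 1 else 0

/-- `|0⟩₁ = (1/√2)(1,1)`. -/
noncomputable def f0 : Bool → ℂ := fun _ => ((1 / Real.sqrt 2 : ℝ) : ℂ)

/-- `|1⟩₁ = (1/√2)(1,−1)`. -/
noncomputable def f1 : Bool → ℂ := fun t =>
  if t then -((1 / Real.sqrt 2 : ℝ) : ℂ) else ((1 / Real.sqrt 2 : ℝ) : ℂ)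

/-!
Let `σ_r` be the sum, over the bases, of the projections onto the states encoding `r`. If
`σ_r ≤ Λ` for every `r`, then `∑ r, tr (M_r σ_r) ≤ tr Λ` for every measurement `M`, by weak duality
for semidefinite programs. Bombieri's inequality shows that two unit vectors with overlap `√2 / 2`
give `σ_r ≤ (1 + √2 / 2) • 1`, so in dimension two the four terms add up to at most `2 + √2`.
-/

section InnerProductSpace

variable {𝕜 E κ : Type*} [RCLike 𝕜] [SeminormedAddCommGroup E] [InnerProductSpace 𝕜 E] [Fintype κ]

open scoped InnerProductSpace

theorem norm_sum_smul_sq_le_of_sum_norm_inner_le {v : κ → E} {C : ℝ}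
    (hv : ∀ i, ∑ j, ‖⟪v i, v j⟫_𝕜‖ ≤ C) (a : κ → 𝕜) :
    ‖∑ i, a i • v i‖ ^ 2 ≤ C * ∑ i, ‖a i‖ ^ 2 := by
  let G i j := ‖⟪v i, v j⟫_𝕜‖
  have G_comm (i j) : G i j = G j i := norm_inner_symm _ _
  have expand : ‖∑ i, a i • v i‖ ^ 2 ≤ ∑ i, ∑ j, ‖a i‖ * ‖a j‖ * G i j := by
    rw [← inner_self_eq_norm_sq (𝕜 := 𝕜), sum_inner]
    simp_rw [inner_sum, inner_smul_left, inner_smul_right]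
    refine (RCLike.re_le_norm _).trans <| (norm_sum_le _ _).trans <| Finset.sum_le_sum fun i _ ↦
      (norm_sum_le _ _).trans_eq <| Finset.sum_congr rfl fun j _ ↦ ?_
    rw [norm_mul, norm_mul, RCLike.norm_conj, mul_assoc]
  have am_gm (i j) : ‖a i‖ * ‖a j‖ * G i j ≤ (‖a i‖ ^ 2 * G i j + ‖a j‖ ^ 2 * G j i) / 2 := by
    rw [← G_comm i j]
    nlinarith [mul_nonneg (sq_nonneg (‖a i‖ - ‖a j‖)) (norm_nonneg ⟪v i, v j⟫_𝕜)]
  calc ‖∑ i, a i • v i‖ ^ 2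
      ≤ ∑ i, ∑ j, (‖a i‖ ^ 2 * G i j + ‖a j‖ ^ 2 * G j i) / 2 :=
        expand.trans <| Finset.sum_le_sum fun i _ ↦ Finset.sum_le_sum fun j _ ↦ am_gm i j
    _ = ∑ i, ‖a i‖ ^ 2 * ∑ j, G i j := by
        simp_rw [← Finset.sum_div, Finset.sum_add_distrib]
        rw [Finset.sum_comm (f := fun i j ↦ ‖a j‖ ^ 2 * G j i), add_self_div_two]
        simp_rw [Finset.mul_sum]
    _ ≤ ∑ i, ‖a i‖ ^ 2 * C := by gcongr with i; exact hv i
    _ = C * ∑ i, ‖a i‖ ^ 2 := by rw [← Finset.sum_mul, mul_comm]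

/-- **Bombieri's inequality**. -/
theorem sum_norm_inner_sq_le_of_sum_norm_inner_le [Nonempty κ] {v : κ → E} {C : ℝ}
    (hv : ∀ i, ∑ j, ‖⟪v i, v j⟫_𝕜‖ ≤ C) (x : E) :
    ∑ i, ‖⟪v i, x⟫_𝕜‖ ^ 2 ≤ C * ‖x‖ ^ 2 := by
  have hC : 0 ≤ C := (Finset.sum_nonneg fun _ _ ↦ norm_nonneg _).trans (hv (Classical.arbitrary κ))
  set S := ∑ i, ‖⟪v i, x⟫_𝕜‖ ^ 2 with hS
  set y := ∑ i, ⟪v i, x⟫_𝕜 • v i with hy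
  have inner_eq : ⟪y, x⟫_𝕜 = (S : 𝕜) := by
    simp only [hS, hy, sum_inner, inner_smul_left, RCLike.conj_mul, map_sum, map_pow]
  have hS_nonneg : 0 ≤ S := by positivity
  have S_le : S ≤ ‖y‖ * ‖x‖ := by
    simpa [inner_eq, abs_of_nonneg hS_nonneg] using norm_inner_le_norm (𝕜 := 𝕜) y x
  have sq_le : S * S ≤ C * ‖x‖ ^ 2 * S := by
    calc S * S ≤ (‖y‖ * ‖x‖) * (‖y‖ * ‖x‖) := by gcongr
      _ = ‖y‖ ^ 2 * ‖x‖ ^ 2 := by ring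
      _ ≤ C * S * ‖x‖ ^ 2 := by gcongr; exact norm_sum_smul_sq_le_of_sum_norm_inner_le hv _
      _ = C * ‖x‖ ^ 2 * S := by ring
  rcases hS_nonneg.eq_or_lt with S_zero | S_pos
  · rw [← S_zero]; positivity
  · exact le_of_mul_le_mul_right sq_le S_pos

end InnerProductSpace

section Measurement

variable {𝕜 n ι κ : Type*} [RCLike 𝕜] [Fintype n] [Fintype ι] [Fintype κ]

open scoped MatrixOrder

theorem star_dotProduct_vecMulVec_star_mulVec (v x : n → 𝕜) :
    star x ⬝ᵥ (vecMulVec v (star v) *ᵥ x) = ((‖star v ⬝ᵥ x‖ ^ 2 : ℝ) : 𝕜) := by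
  have star_eq : star x ⬝ᵥ v = star (star v ⬝ᵥ x) := star_dotProduct x v
  rw [vecMulVec_mulVec, dotProduct_smul, op_smul_eq_mul, star_eq, RCLike.star_def,
    RCLike.conj_mul, RCLike.ofReal_pow]

theorem sum_vecMulVec_star_le_smul_one [DecidableEq n] [Nonempty κ] {v : κ → n → 𝕜} {C : ℝ}
    (hv : ∀ s, ∑ t, ‖star (v s) ⬝ᵥ v t‖ ≤ C) :
    ∑ s, vecMulVec (v s) (star (v s)) ≤ C • (1 : Matrix n n 𝕜) := by
  have inner_eq (x y : n → 𝕜) : inner 𝕜 (WithLp.toLp 2 x) (WithLp.toLp 2 y) = star x ⬝ᵥ y := by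
    rw [EuclideanSpace.inner_toLp_toLp, dotProduct_comm]
  have isHermitian : (C • (1 : Matrix n n 𝕜) - ∑ s, vecMulVec (v s) (star (v s))).IsHermitian :=
    (isHermitian_one.smul (.all C)).sub
      (posSemidef_sum _ fun s _ ↦ posSemidef_vecMulVec_self_star (v s)).isHermitian
  refine .of_dotProduct_mulVec_nonneg isHermitian fun x ↦ ?_
  have bombieri : ∑ s, ‖star (v s) ⬝ᵥ x‖ ^ 2 ≤ C * ‖WithLp.toLp 2 x‖ ^ 2 := by
    simpa only [inner_eq] using sum_norm_inner_sq_le_of_sum_norm_inner_le (𝕜 := 𝕜)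
      (E := EuclideanSpace 𝕜 n) (v := fun s ↦ WithLp.toLp 2 (v s))
      (by simpa only [inner_eq] using hv) (WithLp.toLp 2 x)
  have norm_sq_eq : star x ⬝ᵥ x = ((‖WithLp.toLp 2 x‖ ^ 2 : ℝ) : 𝕜) := by
    rw [← inner_eq, RCLike.ofReal_pow]
    exact inner_self_eq_norm_sq_to_K (E := EuclideanSpace 𝕜 n) _
  rw [sub_mulVec, sum_mulVec, dotProduct_sub, dotProduct_sum, smul_mulVec, one_mulVec,
    dotProduct_smul, norm_sq_eq, RCLike.real_smul_ofReal]
  simp_rw [star_dotProduct_vecMulVec_star_mulVec]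
  rw [← RCLike.ofReal_sum, ← RCLike.ofReal_mul, ← RCLike.ofReal_sub, RCLike.ofReal_nonneg]
  exact sub_nonneg.mpr bombieri

theorem trace_mul_nonneg_of_posSemidef {A B : Matrix n n 𝕜} (hA : A.PosSemidef)
    (hB : B.PosSemidef) : 0 ≤ (A * B).trace := by
  classical
  obtain ⟨D, rfl⟩ := CStarAlgebra.nonneg_iff_eq_star_mul_self.mp hA.nonneg
  rw [Matrix.mul_assoc, trace_mul_comm]
  exact (hB.mul_mul_conjTranspose_same D).trace_nonneg

theorem sum_trace_mul_le_trace [DecidableEq n] {M σ : ι → Matrix n n 𝕜} {Λ : Matrix n n 𝕜}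
    (hM : ∀ r, (M r).PosSemidef) (hsum : ∑ r, M r = 1) (hσ : ∀ r, σ r ≤ Λ) :
    ∑ r, (M r * σ r).trace ≤ Λ.trace := by
  have term_le (r) : (M r * σ r).trace ≤ (M r * Λ).trace := by
    simpa [Matrix.mul_sub] using trace_mul_nonneg_of_posSemidef (hM r) (le_iff.mp (hσ r))
  calc ∑ r, (M r * σ r).trace ≤ ∑ r, (M r * Λ).trace := Finset.sum_le_sum fun r _ ↦ term_le r
    _ = Λ.trace := by rw [← trace_sum, ← Finset.sum_mul, hsum, Matrix.one_mul]

theorem stmt_6_general [DecidableEq n] [Nonempty κ] {M : ι → Matrix n n 𝕜}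
    (hM : ∀ r, (M r).PosSemidef) (hsum : ∑ r, M r = 1) {v : ι → κ → n → 𝕜} {C : ℝ}
    (hv : ∀ r s, ∑ t, ‖star (v r s) ⬝ᵥ v r t‖ ≤ C) :
    ∃ t : ℝ, ∑ s, ∑ r, star (v r s) ⬝ᵥ (M r *ᵥ v r s) = (t : 𝕜) ∧ t ≤ C * Fintype.card n := by
  have trace_eq (r) : (M r * ∑ s, vecMulVec (v r s) (star (v r s))).trace =
      ∑ s, star (v r s) ⬝ᵥ (M r *ᵥ v r s) := by
    simp [Finset.mul_sum, trace_sum, mul_vecMulVec, trace_vecMulVec, dotProduct_comm]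
  have sum_le : ∑ s, ∑ r, star (v r s) ⬝ᵥ (M r *ᵥ v r s) ≤ ((C * Fintype.card n : ℝ) : 𝕜) :=
    calc ∑ s, ∑ r, star (v r s) ⬝ᵥ (M r *ᵥ v r s)
        = ∑ r, (M r * ∑ s, vecMulVec (v r s) (star (v r s))).trace := by
          simp_rw [trace_eq]; exact Finset.sum_comm
      _ ≤ (C • (1 : Matrix n n 𝕜)).trace :=
          sum_trace_mul_le_trace hM hsum fun r ↦ sum_vecMulVec_star_le_smul_one (hv r)
      _ = ((C * Fintype.card n : ℝ) : 𝕜) := by simp [RCLike.real_smul_eq_coe_mul]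
  obtain ⟨re_le, im_eq⟩ := RCLike.le_iff_re_im.mp sum_le
  rw [RCLike.ofReal_re] at re_le
  rw [RCLike.ofReal_im] at im_eq
  exact ⟨_, (RCLike.conj_eq_iff_re.mp (RCLike.conj_eq_iff_im.mpr im_eq)).symm, re_le⟩

end Measurement

/-- The BB84 state `|r⟩ₛ` encoding the bit `r` in the basis `s`. -/
noncomputable def bb84State (r s : Fin 2) : Bool → ℂ := ![![e0, f0], ![e1, f1]] r s

theorem norm_dotProduct_bb84State (r s t : Fin 2) :
    ‖star (bb84State r s) ⬝ᵥ bb84State r t‖ = if s = t then 1 else Real.sqrt 2 / 2 := by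
  have inv_mul_inv : (Real.sqrt 2 : ℂ)⁻¹ * (Real.sqrt 2 : ℂ)⁻¹ = 2⁻¹ := by
    rw [← mul_inv, ← Complex.ofReal_mul, Real.mul_self_sqrt zero_le_two, Complex.ofReal_ofNat]
  have inv_eq : |Real.sqrt 2|⁻¹ = Real.sqrt 2 / 2 := by
    rw [abs_of_nonneg (Real.sqrt_nonneg 2), Real.sqrt_div_self', one_div]
  fin_cases r <;> fin_cases s <;> fin_cases t <;>
    simp [bb84State, e0, e1, f0, f1, dotProduct, inv_mul_inv, inv_eq, ← two_mul]

theorem sum_norm_dotProduct_bb84State (r s : Fin 2) :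
    ∑ t, ‖star (bb84State r s) ⬝ᵥ bb84State r t‖ = 1 + Real.sqrt 2 / 2 := by
  simp only [norm_dotProduct_bb84State, Fin.sum_univ_two]
  fin_cases s <;> simp [add_comm]

/-- For any two-outcome POVM `(M₀, M₁)` on a qubit (`M₀, M₁ ⪰ 0`,
`M₀ + M₁ = I`), the average probability of guessing a uniformly random bit `r` encoded in
a uniformly random BB84 basis `s`, namely
`(1/4)·(e₀*M₀e₀ + e₁*M₁e₁ + f₀*M₀f₀ + f₁*M₁f₁)`,
is a real number and is at most `(2+√2)/4`. -/
theorem stmt_6 (M₀ M₁ : Matrix Bool Bool ℂ)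
    (h₀ : M₀.PosSemidef) (h₁ : M₁.PosSemidef) (hsum : M₀ + M₁ = 1) :
    ∃ t : ℝ,
      ((1 / 4 : ℂ) *
          ((star e0 ⬝ᵥ (M₀ *ᵥ e0)) + (star e1 ⬝ᵥ (M₁ *ᵥ e1)) +
            (star f0 ⬝ᵥ (M₀ *ᵥ f0)) + (star f1 ⬝ᵥ (M₁ *ᵥ f1)))) = (t : ℂ)
      ∧ t ≤ (2 + Real.sqrt 2) / 4 := by
  obtain ⟨t, ht, ht_le⟩ := stmt_6_general (M := ![M₀, M₁]) (by simp [Fin.forall_fin_two, h₀, h₁])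
    (by simpa) fun r s ↦ (sum_norm_dotProduct_bb84State r s).le
  exact ⟨1 / 4 * t, by simpa [bb84State, Fin.sum_univ_two, add_assoc] using ht,
    by norm_num at ht_le; linarith⟩
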